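/- For every integer w ≥ 3, with v = w−1, ∑_{a+b=w, a≥2, b≥1} ζ(a,b̄) = ζ(v̄,1) − ζ(v̄,1̄) + ζ(w̄). -/

import Mathlib

open Filter

/-- Depth-1 Euler sum `ζ(s; e) = ∑_{n ≥ 1} eⁿ / nˢ`,
defined as the limit of partial sums. `e = 1` gives `ζ(s)`, `e = -1` gives `ζ(s̄)`. -/
noncomputable def eulerSum1 (s : ℕ) (e : ℝ) : ℝ :=
  limUnder atTop (fun N : ℕ =>
    ∑ n ∈ Finset.Icc 1 N, e ^ n / (n : ℝ) ^ s)

/-- Depth-2 Euler sum `ζ(s₁, s₂; e₁, e₂) = ∑_{n₁ > n₂ ≥ 1} e₁^{n₁} e₂^{n₂} / (n₁^{s₁} n₂^{s₂})`,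
defined as the limit of iterated partial sums. A bar over an argument means the
corresponding sign is `-1`. -/
noncomputable def eulerSum2 (s₁ s₂ : ℕ) (e₁ e₂ : ℝ) : ℝ :=
  limUnder atTop (fun N : ℕ =>
    ∑ n₁ ∈ Finset.Icc 1 N, ∑ n₂ ∈ Finset.Ico 1 n₁,
      e₁ ^ n₁ * e₂ ^ n₂ / ((n₁ : ℝ) ^ s₁ * (n₂ : ℝ) ^ s₂))

/-- Depth-3 Euler sum
`ζ(s₁, s₂, s₃; e₁, e₂, e₃) = ∑_{n₁ > n₂ > n₃ ≥ 1} e₁^{n₁} e₂^{n₂} e₃^{n₃} / (n₁^{s₁} n₂^{s₂} n₃^{s₃})`. -/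
noncomputable def eulerSum3 (s₁ s₂ s₃ : ℕ) (e₁ e₂ e₃ : ℝ) : ℝ :=
  limUnder atTop (fun N : ℕ =>
    ∑ n₁ ∈ Finset.Icc 1 N, ∑ n₂ ∈ Finset.Ico 1 n₁, ∑ n₃ ∈ Finset.Ico 1 n₂,
      e₁ ^ n₁ * e₂ ^ n₂ * e₃ ^ n₃ / ((n₁ : ℝ) ^ s₁ * (n₂ : ℝ) ^ s₂ * (n₃ : ℝ) ^ s₃))

/-- Depth-1 multiple T-value `T(s) = 2 ∑_{m odd, m ≥ 1} 1 / mˢ`. -/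
noncomputable def tValue1 (s : ℕ) : ℝ :=
  limUnder atTop (fun N : ℕ =>
    ∑ m ∈ Finset.Icc 1 N, if m % 2 = 1 then 2 / (m : ℝ) ^ s else 0)

/-- Depth-2 multiple T-value
`T(s₁, s₂) = ∑_{m₁ > m₂ > 0, m₁ even, m₂ odd} 4 / (m₁^{s₁} m₂^{s₂})`. -/
noncomputable def tValue2 (s₁ s₂ : ℕ) : ℝ :=
  limUnder atTop (fun N : ℕ =>
    ∑ m₁ ∈ Finset.Icc 1 N, ∑ m₂ ∈ Finset.Ico 1 m₁,
      if m₁ % 2 = 0 ∧ m₂ % 2 = 1 then 4 / ((m₁ : ℝ) ^ s₁ * (m₂ : ℝ) ^ s₂) else 0)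

/-- Depth-3 multiple T-value
`T(s₁, s₂, s₃) = ∑_{m₁ > m₂ > m₃ > 0, m₁ odd, m₂ even, m₃ odd} 8 / (m₁^{s₁} m₂^{s₂} m₃^{s₃})`. -/
noncomputable def tValue3 (s₁ s₂ s₃ : ℕ) : ℝ :=
  limUnder atTop (fun N : ℕ =>
    ∑ m₁ ∈ Finset.Icc 1 N, ∑ m₂ ∈ Finset.Ico 1 m₁, ∑ m₃ ∈ Finset.Ico 1 m₂,
      if m₁ % 2 = 1 ∧ m₂ % 2 = 0 ∧ m₃ % 2 = 1 then
        8 / ((m₁ : ℝ) ^ s₁ * (m₂ : ℝ) ^ s₂ * (m₃ : ℝ) ^ s₃) else 0)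

open scoped Topology

/-- The harmonic numbers grow at most like a square root. -/
lemma harmonic_le_two_mul_sqrt (n : ℕ) : (harmonic n : ℝ) ≤ 2 * √n := by
  induction n with
  | zero => simp
  | succ n ih =>
    rw [harmonic_succ]
    push_cast
    have hn : (0 : ℝ) ≤ n := n.cast_nonneg
    have hs : 0 < √((n : ℝ) + 1) := Real.sqrt_pos.2 (by positivity)
    have hle : √(n : ℝ) ≤ √((n : ℝ) + 1) := Real.sqrt_le_sqrt (by linarith)
    have h1 := Real.sq_sqrt hn
    have h2 : √((n : ℝ) + 1) ^ 2 = n + 1 := Real.sq_sqrt (by positivity)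
    have h3 : ((n : ℝ) + 1)⁻¹ ≤ 2 * (√((n : ℝ) + 1) - √n) := by
      rw [inv_le_iff_one_le_mul₀ (by positivity)]
      have hn1 : 1 ≤ √((n : ℝ) + 1) := Real.one_le_sqrt.2 (by linarith)
      have h4 : 1 ≤ 2 * (√((n : ℝ) + 1) - √n) * √((n : ℝ) + 1) := by
        nlinarith [sq_nonneg (√((n : ℝ) + 1) - √n)]
      calc 1 ≤ 2 * (√((n : ℝ) + 1) - √n) * √((n : ℝ) + 1) := h4
        _ ≤ 2 * (√((n : ℝ) + 1) - √n) * √((n : ℝ) + 1) * √((n : ℝ) + 1) :=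
          le_mul_of_one_le_right (by linarith) hn1
        _ = 2 * (√((n : ℝ) + 1) - √n) * (n + 1) := by rw [mul_assoc, ← sq, h2]
    linarith

lemma harmonic_cast_eq_sum_Icc (n : ℕ) :
    (harmonic n : ℝ) = ∑ k ∈ Finset.Icc 1 n, 1 / (k : ℝ) := by
  rw [harmonic_eq_sum_Icc]
  push_cast
  simp

lemma sum_Ico_one_div_eq_harmonic_sub (n : ℕ) (hn : 1 ≤ n) :
    ∑ k ∈ Finset.Ico 1 n, 1 / (k : ℝ) = harmonic n - 1 / n := by
  obtain ⟨m, rfl⟩ : ∃ m, n = m + 1 := ⟨n - 1, by omega⟩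
  rw [harmonic_succ, show Finset.Ico 1 (m + 1) = Finset.Icc 1 m by ext; simp,
    ← harmonic_cast_eq_sum_Icc]
  push_cast
  ring

lemma harmonic_add_sub_harmonic_le (r m : ℕ) :
    (harmonic (r + m) : ℝ) - harmonic r ≤ m / (r + 1) := by
  induction m with
  | zero => simp
  | succ m ih =>
    rw [← add_assoc, harmonic_succ]
    push_cast
    have h : ((r : ℝ) + m + 1)⁻¹ ≤ 1 / (r + 1) := by
      rw [← one_div]
      gcongr
      linarith [(m.cast_nonneg : (0 : ℝ) ≤ m)]
    rw [add_div]
    linarith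

lemma harmonic_cast_mono {m n : ℕ} (h : m ≤ n) : (harmonic m : ℝ) ≤ harmonic n := by
  rw [harmonic_cast_eq_sum_Icc, harmonic_cast_eq_sum_Icc]
  exact Finset.sum_le_sum_of_subset_of_nonneg (Finset.Icc_subset_Icc_right h)
    fun _ _ _ => by positivity

/-- The partial sums of an absolutely convergent series over `n ≥ 1` converge. -/
lemma Summable.exists_tendsto_sum_Icc {f : ℕ → ℝ} (hf : Summable f) :
    ∃ l, Tendsto (fun N : ℕ => ∑ n ∈ Finset.Icc 1 N, f n) atTop (𝓝 l) := by
  refine ⟨∑' n, f n - f 0,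
    (((tendsto_add_atTop_iff_nat 1).2 hf.hasSum.tendsto_sum_nat).sub_const (f 0)).congr
      fun N => ?_⟩
  rw [Finset.range_eq_Ico, Finset.sum_eq_sum_Ico_succ_bot (by omega)]
  rw [show Finset.Ico (0 + 1) (N + 1) = Finset.Icc 1 N by ext; simp]
  ring

lemma tendsto_eulerSum1 {s : ℕ} {e : ℝ} (hs : 2 ≤ s) (he : |e| ≤ 1) :
    Tendsto (fun N : ℕ => ∑ n ∈ Finset.Icc 1 N, e ^ n / (n : ℝ) ^ s) atTop
      (𝓝 (eulerSum1 s e)) := by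
  refine tendsto_nhds_limUnder (Summable.exists_tendsto_sum_Icc ?_)
  refine Summable.of_norm_bounded (Real.summable_one_div_nat_pow.2 (by omega : 1 < s)) fun n => ?_
  rw [Real.norm_eq_abs, abs_div, abs_pow, abs_of_nonneg (by positivity : (0 : ℝ) ≤ (n : ℝ) ^ s)]
  gcongr
  exact pow_le_one₀ (abs_nonneg e) he

lemma tendsto_eulerSum2 {s₁ s₂ : ℕ} {e₁ e₂ : ℝ} (hs₁ : 2 ≤ s₁) (hs₂ : 1 ≤ s₂)
    (he₁ : |e₁| ≤ 1) (he₂ : |e₂| ≤ 1) :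
    Tendsto (fun N : ℕ => ∑ n₁ ∈ Finset.Icc 1 N, ∑ n₂ ∈ Finset.Ico 1 n₁,
      e₁ ^ n₁ * e₂ ^ n₂ / ((n₁ : ℝ) ^ s₁ * (n₂ : ℝ) ^ s₂)) atTop
      (𝓝 (eulerSum2 s₁ s₂ e₁ e₂)) := by
  refine tendsto_nhds_limUnder (Summable.exists_tendsto_sum_Icc ?_)
  have hsum : Summable fun n : ℕ => 2 * (1 / (n : ℝ) ^ (3 / 2 : ℝ)) :=
    (Real.summable_one_div_nat_rpow.2 (by norm_num)).mul_left 2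
  refine Summable.of_norm_bounded hsum fun n => ?_
  rcases Nat.eq_zero_or_pos n with rfl | hn
  · simp
  have hn0 : (0 : ℝ) < n := by exact_mod_cast hn
  have hn1 : (1 : ℝ) ≤ n := by exact_mod_cast hn
  calc _ ≤ ∑ m ∈ Finset.Ico 1 n, 1 / (n : ℝ) ^ 2 * (1 / (m : ℝ)) := by
        refine norm_sum_le_of_le _ fun m hm => ?_
        have hm1 : (1 : ℝ) ≤ m := by exact_mod_cast (Finset.mem_Ico.1 hm).1
        rw [Real.norm_eq_abs, abs_div, abs_mul, abs_pow, abs_pow,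
          abs_of_nonneg (by positivity : (0 : ℝ) ≤ (n : ℝ) ^ s₁ * (m : ℝ) ^ s₂),
          one_div_mul_one_div]
        gcongr
        · exact mul_le_one₀ (pow_le_one₀ (abs_nonneg _) he₁) (by positivity)
            (pow_le_one₀ (abs_nonneg _) he₂)
        · exact le_self_pow₀ hm1 (by omega)
    _ ≤ 1 / (n : ℝ) ^ 2 * (2 * √n) := by
        rw [← Finset.mul_sum, sum_Ico_one_div_eq_harmonic_sub n hn]
        gcongr
        have := harmonic_le_two_mul_sqrt n
        have : 0 < 1 / (n : ℝ) := by positivity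
        linarith
    _ = 2 * (1 / (n : ℝ) ^ (3 / 2 : ℝ)) := by
        have h : (n : ℝ) ^ 2 = (n : ℝ) ^ (3 / 2 : ℝ) * √n := by
          rw [Real.sqrt_eq_rpow, ← Real.rpow_add hn0, ← Real.rpow_natCast]
          norm_num
        have : 0 < √(n : ℝ) := Real.sqrt_pos.2 hn0
        rw [h]
        field_simp

/-- The geometric sum over the exponents, split into partial fractions. -/
lemma sum_one_div_pow_mul_pow (t : ℕ) {x y : ℝ} (hx : x ≠ 0) (hy : y ≠ 0) (hxy : x - y ≠ 0) :
    ∑ a ∈ Finset.Icc 2 (t + 1), 1 / (x ^ a * y ^ (t + 2 - a))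
      = 1 / y ^ (t + 1) * (1 / (x - y) - 1 / x) - 1 / x ^ (t + 1) * (1 / (x - y)) := by
  induction t with
  | zero => simp; field_simp; ring
  | succ t ih =>
    rw [Finset.sum_Icc_succ_top (by omega)]
    have h : ∑ a ∈ Finset.Icc 2 (t + 1), 1 / (x ^ a * y ^ (t + 1 + 2 - a))
        = 1 / y * ∑ a ∈ Finset.Icc 2 (t + 1), 1 / (x ^ a * y ^ (t + 2 - a)) := by
      rw [Finset.mul_sum]
      refine Finset.sum_congr rfl fun a ha => ?_
      rw [show t + 1 + 2 - a = t + 2 - a + 1 by have := (Finset.mem_Icc.1 ha).2; omega, pow_succ]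
      field_simp
    rw [h, ih, show t + 1 + 2 - (t + 1 + 1) = 1 by omega]
    field_simp
    ring

lemma sum_Ico_neg_one_pow_mul_one_div_sub (n : ℕ) :
    ∑ m ∈ Finset.Ico 1 n, (-1 : ℝ) ^ m * (1 / ((n : ℝ) - m))
      = ∑ k ∈ Finset.Ico 1 n, (-1 : ℝ) ^ n * (-1) ^ k * (1 / (k : ℝ)) := by
  refine Finset.sum_nbij' (fun m => n - m) (fun m => n - m) ?_ ?_ ?_ ?_ ?_
  any_goals intro m hm; have := Finset.mem_Ico.1 hm
  any_goals simp only [Finset.mem_Ico]; omega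
  any_goals omega
  obtain ⟨k, rfl⟩ : ∃ k, n = m + k := ⟨n - m, by omega⟩
  rw [show m + k - m = k by omega, pow_add, mul_assoc ((-1 : ℝ) ^ m), ← mul_pow]
  simp

/-- Summing over all exponents, for a fixed outer index `n`. -/
lemma sum_exponents_inner (t : ℕ) {n : ℕ} (hn : 1 ≤ n) :
    ∑ a ∈ Finset.Icc 2 (t + 1), ∑ m ∈ Finset.Ico 1 n,
        (1 : ℝ) ^ n * (-1) ^ m / ((n : ℝ) ^ a * (m : ℝ) ^ (t + 2 - a))
      = ∑ m ∈ Finset.Ico 1 n, (-1 : ℝ) ^ m / (m : ℝ) ^ (t + 1) * (1 / ((n : ℝ) - m) - 1 / n)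
        - ∑ m ∈ Finset.Ico 1 n, (-1 : ℝ) ^ n * (-1) ^ m / ((n : ℝ) ^ (t + 1) * (m : ℝ) ^ 1) := by
  have h2 : ∑ m ∈ Finset.Ico 1 n, (-1 : ℝ) ^ n * (-1) ^ m / ((n : ℝ) ^ (t + 1) * (m : ℝ) ^ 1)
      = 1 / (n : ℝ) ^ (t + 1) * ∑ m ∈ Finset.Ico 1 n, (-1 : ℝ) ^ m * (1 / ((n : ℝ) - m)) := by
    rw [sum_Ico_neg_one_pow_mul_one_div_sub, Finset.mul_sum]
    refine Finset.sum_congr rfl fun m _ => ?_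
    ring
  rw [h2, Finset.mul_sum, ← Finset.sum_sub_distrib, Finset.sum_comm]
  refine Finset.sum_congr rfl fun m hm => ?_
  have hm := Finset.mem_Ico.1 hm
  have hmn : (m : ℝ) < n := by exact_mod_cast hm.2
  have hm0 : (m : ℝ) ≠ 0 := Nat.cast_ne_zero.2 (by omega)
  have hn0 : (n : ℝ) ≠ 0 := Nat.cast_ne_zero.2 (by omega)
  have key := sum_one_div_pow_mul_pow t hn0 hm0 (sub_pos.2 hmn).ne'
  calc _ = (-1 : ℝ) ^ m *
        ∑ a ∈ Finset.Icc 2 (t + 1), 1 / ((n : ℝ) ^ a * (m : ℝ) ^ (t + 2 - a)) := by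
        rw [Finset.mul_sum]
        refine Finset.sum_congr rfl fun a _ => ?_
        rw [one_pow]
        ring
    _ = _ := by
        rw [key]
        ring

/-- The truncation error in the finite form of the sum formula. -/
noncomputable def harmonicTail (v N : ℕ) : ℝ :=
  ∑ m ∈ Finset.Icc 1 N, (-1 : ℝ) ^ m / (m : ℝ) ^ v * (harmonic N - harmonic (N - m))

lemma harmonicTail_succ (v N : ℕ) :
    harmonicTail v (N + 1) = harmonicTail v N
      - ∑ m ∈ Finset.Ico 1 (N + 1),
          (-1 : ℝ) ^ m / (m : ℝ) ^ v * (1 / (((N + 1 : ℕ) : ℝ) - m) - 1 / ((N + 1 : ℕ) : ℝ))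
      + (-1 : ℝ) ^ (N + 1) / ((N + 1 : ℕ) : ℝ) ^ v * harmonic (N + 1) := by
  unfold harmonicTail
  rw [Finset.sum_Icc_succ_top (by omega),
    show Finset.Ico 1 (N + 1) = Finset.Icc 1 N by ext; simp, ← Finset.sum_sub_distrib]
  congr 1
  · refine Finset.sum_congr rfl fun m hm => ?_
    obtain ⟨k, rfl⟩ : ∃ k, N = m + k := ⟨N - m, by have := (Finset.mem_Icc.1 hm).2; omega⟩
    rw [show m + k + 1 - m = k + 1 by omega, show m + k - m = k by omega, harmonic_succ,
      harmonic_succ]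
    push_cast
    rw [show (m : ℝ) + k + 1 - m = k + 1 by ring]
    ring
  · simp

/-- The sum formula for partial sums, up to the truncation error. -/
lemma sum_partial_unbar_bar (t N : ℕ) :
    ∑ a ∈ Finset.Icc 2 (t + 1), ∑ n ∈ Finset.Icc 1 N, ∑ m ∈ Finset.Ico 1 n,
        (1 : ℝ) ^ n * (-1) ^ m / ((n : ℝ) ^ a * (m : ℝ) ^ (t + 2 - a))
      = ∑ n ∈ Finset.Icc 1 N, ∑ m ∈ Finset.Ico 1 n,
          (-1 : ℝ) ^ n * 1 ^ m / ((n : ℝ) ^ (t + 1) * (m : ℝ) ^ 1)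
        - ∑ n ∈ Finset.Icc 1 N, ∑ m ∈ Finset.Ico 1 n,
          (-1 : ℝ) ^ n * (-1) ^ m / ((n : ℝ) ^ (t + 1) * (m : ℝ) ^ 1)
        + ∑ n ∈ Finset.Icc 1 N, (-1 : ℝ) ^ n / (n : ℝ) ^ (t + 2)
        - harmonicTail (t + 1) N := by
  rw [Finset.sum_comm]
  induction N with
  | zero => simp [harmonicTail]
  | succ N ih =>
    have hN : 1 ≤ N + 1 := by omega
    have h1 : ∑ m ∈ Finset.Ico 1 (N + 1),
        (-1 : ℝ) ^ (N + 1) * 1 ^ m / (((N + 1 : ℕ) : ℝ) ^ (t + 1) * (m : ℝ) ^ 1)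
        = (-1 : ℝ) ^ (N + 1) / ((N + 1 : ℕ) : ℝ) ^ (t + 1) * harmonic (N + 1)
          - (-1 : ℝ) ^ (N + 1) / ((N + 1 : ℕ) : ℝ) ^ (t + 2) := by
      have := sum_Ico_one_div_eq_harmonic_sub (N + 1) hN
      rw [eq_sub_iff_add_eq] at this
      rw [← this, mul_add, Finset.mul_sum, pow_succ _ (t + 1), div_mul_div_comm, mul_one,
        add_sub_cancel_right]
      refine Finset.sum_congr rfl fun m _ => ?_
      rw [one_pow, pow_one, div_mul_div_comm]
    simp only [Finset.sum_Icc_succ_top hN]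
    rw [ih, sum_exponents_inner t hN, harmonicTail_succ, h1]
    ring

lemma abs_harmonicTail_le {v : ℕ} (hv : 2 ≤ v) (N : ℕ) :
    |harmonicTail v N| ≤ 2 * harmonic N / (N + 1) := by
  have hrefl : ∑ m ∈ Finset.Icc 1 N, 1 / ((N : ℝ) + 1 - m) = harmonic N := by
    rw [harmonic_cast_eq_sum_Icc]
    refine Finset.sum_nbij' (fun m => N + 1 - m) (fun m => N + 1 - m) ?_ ?_ ?_ ?_ ?_
    any_goals intro m hm; have := Finset.mem_Icc.1 hm
    any_goals simp only [Finset.mem_Icc]; omega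
    any_goals omega
    rw [Nat.cast_sub (by omega)]
    push_cast
    rfl
  calc |harmonicTail v N|
      ≤ ∑ m ∈ Finset.Icc 1 N, 1 / ((N : ℝ) + 1) * (1 / m + 1 / ((N : ℝ) + 1 - m)) := by
        unfold harmonicTail
        refine (Finset.abs_sum_le_sum_abs _ _).trans (Finset.sum_le_sum fun m hm => ?_)
        have hm := Finset.mem_Icc.1 hm
        obtain ⟨r, rfl⟩ : ∃ r, N = r + m := ⟨N - m, by omega⟩
        have hm1 : (1 : ℝ) ≤ m := by exact_mod_cast hm.1
        rw [Nat.add_sub_cancel, abs_mul, abs_div, abs_pow, abs_neg, abs_one, one_pow,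
          abs_of_nonneg (by positivity : (0 : ℝ) ≤ (m : ℝ) ^ v),
          abs_of_nonneg (sub_nonneg.2 (harmonic_cast_mono (by omega)))]
        calc 1 / (m : ℝ) ^ v * (harmonic (r + m) - harmonic r)
            ≤ 1 / (m : ℝ) ^ 2 * (m / (r + 1)) := by
              gcongr
              · exact sub_nonneg.2 (harmonic_cast_mono (by omega))
              · exact harmonic_add_sub_harmonic_le r m
          _ = _ := by
              push_cast
              rw [show (r : ℝ) + m + 1 - m = r + 1 by ring]
              field_simp
              ring
    _ = 2 * harmonic N / (N + 1) := by
        rw [← Finset.mul_sum, Finset.sum_add_distrib, hrefl, ← harmonic_cast_eq_sum_Icc]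
        ring

lemma tendsto_harmonicTail {v : ℕ} (hv : 2 ≤ v) :
    Tendsto (harmonicTail v) atTop (𝓝 0) := by
  have hlim : Tendsto (fun N : ℕ => 4 * (√(N : ℝ))⁻¹) atTop (𝓝 0) := by
    simpa using (tendsto_inv_atTop_zero.comp
      (Real.tendsto_sqrt_atTop.comp tendsto_natCast_atTop_atTop)).const_mul (4 : ℝ)
  refine squeeze_zero_norm' ?_ hlim
  filter_upwards [eventually_gt_atTop 0] with N hN
  have hN0 : (0 : ℝ) < N := by exact_mod_cast hN
  have hs : 0 < √(N : ℝ) := Real.sqrt_pos.2 hN0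
  calc ‖harmonicTail v N‖ ≤ 2 * harmonic N / (N + 1) := abs_harmonicTail_le hv N
    _ ≤ 2 * (2 * √N) / N := by
        gcongr
        · exact harmonic_le_two_mul_sqrt N
        · linarith
    _ = 4 * (√(N : ℝ))⁻¹ := by
        nth_rewrite 2 [← Real.mul_self_sqrt hN0.le]
        field_simp
        norm_num

/-- For `w ≥ 3`, with `v = w − 1`: `∑_{a+b=w, a≥2} ζ(a,b̄) = ζ(v̄,1) − ζ(v̄,1̄) + ζ(w̄)`. -/
theorem sum_zeta_unbar_bar (w : ℕ) (hw : 3 ≤ w) :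
    ∑ a ∈ Finset.Icc 2 (w - 1), eulerSum2 a (w - a) 1 (-1)
      = eulerSum2 (w - 1) 1 (-1) 1 - eulerSum2 (w - 1) 1 (-1) (-1) + eulerSum1 w (-1) := by
  obtain ⟨t, ht, rfl⟩ : ∃ t, 1 ≤ t ∧ w = t + 2 := ⟨w - 2, by omega, by omega⟩
  rw [show t + 2 - 1 = t + 1 by omega]
  have hneg : |(-1 : ℝ)| ≤ 1 := by simp
  have hone : |(1 : ℝ)| ≤ 1 := by simp
  have hleft := tendsto_finsetSum (Finset.Icc 2 (t + 1)) fun a ha =>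
    tendsto_eulerSum2 (s₁ := a) (s₂ := t + 2 - a) (Finset.mem_Icc.1 ha).1
      (by have := (Finset.mem_Icc.1 ha).2; omega) hone hneg
  have hv : 2 ≤ t + 1 := by omega
  have hright := (((tendsto_eulerSum2 hv le_rfl hneg hone).sub
    (tendsto_eulerSum2 hv le_rfl hneg hneg)).add
    (tendsto_eulerSum1 (by omega : 2 ≤ t + 2) hneg)).sub (tendsto_harmonicTail hv)
  rw [sub_zero] at hright
  exact tendsto_nhds_unique hleft (hright.congr fun N => (sum_partial_unbar_bar t N).symm)
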